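/- Let (X, Σ) be an implicational base with closure operator φ, let B⁺ and B⁻ be dual antichains of closed sets in the lattice L(Σ), and let H = {X \ B : B ∈ B⁺} be the complementary hypergraph of B⁺. If I ∈ B⁻ and T is an inclusion-minimal transversal of H such that I ⊆ φ(T), then T is a minimal covering set of I, that is, I ⊆ φ(T) and I ⊈ φ(T \ {x}) for every x ∈ T. -/

import Mathlib

/-- A set `C` is closed w.r.t. the implicational base `Sig`. -/
def ImpClosed {α : Type*} (Sig : Finset (Finset α × α)) (C : Set α) : Prop :=
  ∀ p ∈ Sig, (p.1 : Set α) ⊆ C → p.2 ∈ C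

/-- `phi` is the closure operator of the implicational base `Sig`. -/
def IsClosureOperator {α : Type*} (Sig : Finset (Finset α × α)) (phi : Set α → Set α) : Prop :=
  ∀ S : Set α, S ⊆ phi S ∧ ImpClosed Sig (phi S) ∧
    ∀ C : Set α, ImpClosed Sig C → S ⊆ C → phi S ⊆ C

/-- `T` is a transversal of the hypergraph `H`. -/
def IsTransversal {α : Type*} (H : Set (Set α)) (T : Set α) : Prop :=
  ∀ E ∈ H, (T ∩ E).Nonempty

/-- `T` is an inclusion-minimal transversal of `H`. -/
def IsMinTransversal {α : Type*} (H : Set (Set α)) (T : Set α) : Prop :=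
  IsTransversal H T ∧ ∀ T' : Set α, IsTransversal H T' → T' ⊆ T → T' = T

/-- The antichains `Bp` and `Bm` of closed sets are dual in the lattice of
closed sets of `Sig`. -/
def AreDual {α : Type*} (Sig : Finset (Finset α × α)) (Bp Bm : Set (Set α)) : Prop :=
  ∀ C : Set α, ImpClosed Sig C → Xor' (∃ B ∈ Bp, C ⊆ B) (∃ I ∈ Bm, I ⊆ C)

/-- `T` is a minimal covering set of `I` w.r.t. `phi`. -/
def IsMinCoveringSet {α : Type*} (phi : Set α → Set α) (I T : Set α) : Prop :=
  I ⊆ phi T ∧ ∀ x ∈ T, ¬ I ⊆ phi (T \ {x})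

/-!
If `I ⊆ φ(S)` and a closed set `B` contains `S`, then it contains `φ(S)` and hence `I`, which
duality forbids for `B ∈ B⁺` and `I ∈ B⁻`. So every covering set of `I` meets each `X \ B`, i.e.
is a transversal of the complementary hypergraph. When `T` is a minimal transversal, no `T \ {x}`
with `x ∈ T` is a transversal, so none covers `I`.
-/

section

variable {α : Type*}

theorem isTransversal_image_compl_iff {Bp : Set (Set α)} {T : Set α} :
    IsTransversal ((fun B => Bᶜ) '' Bp) T ↔ ∀ B ∈ Bp, ¬ T ⊆ B := by
  simp only [IsTransversal, Set.forall_mem_image, Set.inter_compl_nonempty_iff]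

theorem IsMinTransversal.not_isTransversal_sdiff_singleton {H : Set (Set α)} {T : Set α}
    (hT : IsMinTransversal H T) {x : α} (hx : x ∈ T) : ¬ IsTransversal H (T \ {x}) := fun hTx =>
  (Set.sdiff_singleton_ssubset.2 hx).ne (hT.2 _ hTx Set.sdiff_subset)

theorem isTransversal_image_compl_of_subset_closure (c : ClosureOperator (Set α))
    {Bp : Set (Set α)} (hBclosed : ∀ B ∈ Bp, c.IsClosed B) {I S : Set α} (hI : ∀ B ∈ Bp, ¬ I ⊆ B)
    (hIS : I ⊆ c S) : IsTransversal ((fun B => Bᶜ) '' Bp) S :=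
  isTransversal_image_compl_iff.2 fun B hB hSB =>
    hI B hB (hIS.trans (c.closure_min hSB (hBclosed B hB)))

theorem AreDual.not_subset {Sig : Finset (Finset α × α)} {Bp Bm : Set (Set α)}
    (h : AreDual Sig Bp Bm) {B I : Set α} (hBclosed : ImpClosed Sig B) (hB : B ∈ Bp)
    (hI : I ∈ Bm) : ¬ I ⊆ B := fun hIB =>
  (xor_iff_not_iff _ _).1 (h B hBclosed) (iff_of_true ⟨B, hB, subset_rfl⟩ ⟨I, hI, hIB⟩)

namespace IsClosureOperator

variable {Sig : Finset (Finset α × α)} {phi : Set α → Set α}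

/-- The closure operator of an implicational base as a bundled `ClosureOperator`, which gives
access to the library of closure operators on a partial order. -/
def toClosureOperator (h : IsClosureOperator Sig phi) : ClosureOperator (Set α) :=
  .mk₂ phi (fun S => (h S).1) fun {S S'} hSS' => (h S).2.2 (phi S') (h S').2.1 hSS'

theorem isClosed_toClosureOperator (h : IsClosureOperator Sig phi) {C : Set α}
    (hC : ImpClosed Sig C) : h.toClosureOperator.IsClosed C :=
  ClosureOperator.isClosed_iff_closure_le.2 ((h C).2.2 C hC subset_rfl)

end IsClosureOperator

theorem stmt_3_general (c : ClosureOperator (Set α)) {Bp : Set (Set α)}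
    (hBclosed : ∀ B ∈ Bp, c.IsClosed B) {I T : Set α} (hI : ∀ B ∈ Bp, ¬ I ⊆ B)
    (hT : IsMinTransversal ((fun B => Bᶜ) '' Bp) T) (hIT : I ⊆ c T) :
    IsMinCoveringSet c I T :=
  ⟨hIT, fun _ hx hIx => hT.not_isTransversal_sdiff_singleton hx
    (isTransversal_image_compl_of_subset_closure c hBclosed hI hIx)⟩

end

theorem stmt_3 {α : Type*} [DecidableEq α] [Fintype α]
    (Sig : Finset (Finset α × α)) (phi : Set α → Set α)
    (hphi : IsClosureOperator Sig phi) (Bp Bm : Set (Set α))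
    (hBpClosed : ∀ B ∈ Bp, ImpClosed Sig B) (hBmClosed : ∀ I ∈ Bm, ImpClosed Sig I)
    (hBpAC : IsAntichain (· ⊆ ·) Bp) (hBmAC : IsAntichain (· ⊆ ·) Bm)
    (hdual : AreDual Sig Bp Bm)
    (H : Set (Set α)) (hH : H = (fun B => Bᶜ) '' Bp)
    (I : Set α) (hI : I ∈ Bm) (T : Set α) (hT : IsMinTransversal H T)
    (hIT : I ⊆ phi T) :
    IsMinCoveringSet phi I T := by
  subst hH
  exact stmt_3_general hphi.toClosureOperator
    (fun B hB => hphi.isClosed_toClosureOperator (hBpClosed B hB))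
    (fun B hB => hdual.not_subset (hBpClosed B hB) hB hI) hT hIT
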